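/- Let f, g : ℝ → ℝ be 1-Lipschitz functions, let a < b be real numbers, and let φ : [−1,1] → ℝ be a bounded Borel measurable function. Then ∫_a^b φ(f′(y)) dy + ∫_a^b φ(g′(y)) dy = ∫_a^b φ((f ∨ g)′(y)) dy + ∫_a^b φ((f ∧ g)′(y)) dy, where f ∨ g and f ∧ g denote the pointwise maximum and minimum of f and g (all derivatives exist almost everywhere by Rademacher's theorem and take values in [−1,1], so all four integrals are finite). -/

import Mathlib

open MeasureTheory intervalIntegral

/-!
Where `f ≠ g`, the maximum locally coincides with one of the two functions and the minimum with
the other. Where `f = g` but `f' ≠ g'`, the zero of `f - g` is isolated, so there are only countably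
many such points. At the remaining points all four derivatives agree. Hence, up to a null set, the
pair `(max', min')` is `(f', g')` on the open set `interior {g < f}` and `(g', f')` off it.
-/

open Set Filter Topology

section Selection

variable {𝕜 E F : Type*} [NontriviallyNormedField 𝕜]
  [NormedAddCommGroup E] [NormedSpace 𝕜 E] [NormedAddCommGroup F] [NormedSpace 𝕜 F]

theorem hasFDerivAt_of_eventually_eq_or_eq {f g h : E → F} {L : E →L[𝕜] F} {x : E}
    (hf : HasFDerivAt f L x) (hg : HasFDerivAt g L x) (hfg : f x = g x)
    (hh : ∀ᶠ z in 𝓝 x, h z = f z ∨ h z = g z) : HasFDerivAt h L x := by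
  have hx : h x = f x := hh.self_of_nhds.elim id (·.trans hfg.symm)
  refine .of_isLittleO <| Asymptotics.IsLittleO.of_bound fun c hc ↦ ?_
  filter_upwards [hh, hf.isLittleO.bound hc, hg.isLittleO.bound hc] with z hz hfz hgz
  rcases hz with hz | hz
  · rwa [hz, hx]
  · rwa [hz, hx, hfg]

end Selection

section MaxMin

variable {E : Type*} [NormedAddCommGroup E] [NormedSpace ℝ E] {f g : E → ℝ} {f' g' : E →L[ℝ] ℝ}
  {x : E}

theorem hasFDerivAt_max_of_le (hf : HasFDerivAt f f' x) (hg : HasFDerivAt g g' x)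
    (hle : f x ≤ g x) (htouch : f x = g x → f' = g') :
    HasFDerivAt (fun z ↦ max (f z) (g z)) g' x := by
  rcases hle.lt_or_eq with hlt | heq
  · have hev : ∀ᶠ z in 𝓝 x, f z < g z := hf.continuousAt.eventually_lt hg.continuousAt hlt
    exact hg.congr_of_eventuallyEq <| hev.mono fun z hz ↦ max_eq_right hz.le
  · exact hasFDerivAt_of_eventually_eq_or_eq (htouch heq ▸ hf) hg heq <|
      .of_forall fun z ↦ max_choice (f z) (g z)

theorem hasFDerivAt_min_of_le (hf : HasFDerivAt f f' x) (hg : HasFDerivAt g g' x)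
    (hle : f x ≤ g x) (htouch : f x = g x → f' = g') :
    HasFDerivAt (fun z ↦ min (f z) (g z)) f' x := by
  have hmin : (fun z ↦ min (f z) (g z)) = fun z ↦ f z + g z - max (f z) (g z) :=
    funext fun z ↦ eq_sub_of_add_eq (min_add_max (f z) (g z))
  rw [hmin]
  simpa only [add_sub_cancel_right] using
    (hf.fun_add hg).fun_sub (hasFDerivAt_max_of_le hf hg hle htouch)

end MaxMin

section Touching

variable {𝕜 F : Type*} [NontriviallyNormedField 𝕜] [SecondCountableTopology 𝕜]
  [NormedAddCommGroup F] [NormedSpace 𝕜 F]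

theorem countable_setOf_eq_and_deriv_ne_zero (f : 𝕜 → F) (c : F) :
    {x | f x = c ∧ deriv f x ≠ 0}.Countable := by
  refine (HereditarilyLindelofSpace.isLindelof _).countable_of_isDiscrete <|
    isDiscrete_iff_nhdsNE.2 fun x ⟨_, hx⟩ ↦ ?_
  have hne : ∀ᶠ z in 𝓝[≠] x, f z ≠ c :=
    (differentiableAt_of_deriv_ne_zero hx).hasDerivAt.eventually_ne hx
  exact inf_principal_eq_bot.2 <| hne.mono fun z hz hzc ↦ hz hzc.1

theorem ae_eq_imp_deriv_eq [MeasurableSpace 𝕜] {μ : Measure 𝕜} [NullSingletonClass μ] {f g : 𝕜 → F}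
    (hf : ∀ᵐ x ∂μ, DifferentiableAt 𝕜 f x) (hg : ∀ᵐ x ∂μ, DifferentiableAt 𝕜 g x) :
    ∀ᵐ x ∂μ, f x = g x → deriv f x = deriv g x := by
  filter_upwards [hf, hg, (countable_setOf_eq_and_deriv_ne_zero (f - g) 0).ae_notMem μ]
    with x hfx hgx hx hfg
  by_contra hne
  exact hx ⟨sub_eq_zero.2 hfg, by rwa [deriv_sub hfx hgx, sub_ne_zero]⟩

end Touching

theorem integral_piecewise_add_integral_piecewise_swap {α E : Type*} [MeasurableSpace α]
    [NormedAddCommGroup E] [NormedSpace ℝ E] {μ : Measure α} {s : Set α} [DecidablePred (· ∈ s)]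
    (hs : MeasurableSet s) {u v : α → E} (hu : Integrable u μ) (hv : Integrable v μ) :
    (∫ x, s.piecewise u v x ∂μ) + ∫ x, s.piecewise v u x ∂μ = (∫ x, u x ∂μ) + ∫ x, v x ∂μ := by
  rw [integral_piecewise hs hu.integrableOn hv.integrableOn,
    integral_piecewise hs hv.integrableOn hu.integrableOn,
    ← integral_add_compl hs hu, ← integral_add_compl hs hv]
  abel

theorem mem_interior_setOf_lt_iff {X Y : Type*} [TopologicalSpace X] [LinearOrder Y]
    [TopologicalSpace Y] [OrderClosedTopology Y] {f g : X → Y} {x : X}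
    (hf : ContinuousAt f x) (hg : ContinuousAt g x) :
    x ∈ interior {z | f z < g z} ↔ f x < g x :=
  ⟨fun hx ↦ (interior_subset hx : x ∈ {z | f z < g z}),
    fun hx ↦ mem_interior_iff_mem_nhds.2 (hf.eventually_lt hg hx)⟩

section Rewiring

variable {f g : ℝ → ℝ}

theorem deriv_max_of_le {y : ℝ} (hf : DifferentiableAt ℝ f y) (hg : DifferentiableAt ℝ g y)
    (hle : f y ≤ g y) (htouch : f y = g y → deriv f y = deriv g y) :
    deriv (fun z ↦ max (f z) (g z)) y = deriv g y :=
  HasDerivAt.deriv <| hasFDerivAt_max_of_le hf.hasDerivAt hg.hasDerivAt hle fun h ↦ by rw [htouch h]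

theorem deriv_min_of_le {y : ℝ} (hf : DifferentiableAt ℝ f y) (hg : DifferentiableAt ℝ g y)
    (hle : f y ≤ g y) (htouch : f y = g y → deriv f y = deriv g y) :
    deriv (fun z ↦ min (f z) (g z)) y = deriv f y :=
  HasDerivAt.deriv <| hasFDerivAt_min_of_le hf.hasDerivAt hg.hasDerivAt hle fun h ↦ by rw [htouch h]

variable {μ : Measure ℝ} [NullSingletonClass μ]

open scoped Classical in
theorem deriv_max_ae_eq_piecewise (hf : ∀ᵐ y ∂μ, DifferentiableAt ℝ f y)
    (hg : ∀ᵐ y ∂μ, DifferentiableAt ℝ g y) :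
    deriv (fun z ↦ max (f z) (g z)) =ᵐ[μ]
      (interior {z | g z < f z}).piecewise (deriv f) (deriv g) := by
  filter_upwards [hf, hg, ae_eq_imp_deriv_eq hf hg] with y hfy hgy htouch
  have hmem := mem_interior_setOf_lt_iff hgy.continuousAt hfy.continuousAt
  rcases lt_or_ge (g y) (f y) with hlt | hle
  · rw [piecewise_eq_of_mem _ _ _ (hmem.2 hlt)]
    simp only [max_comm (f _)]
    exact deriv_max_of_le hgy hfy hlt.le fun h ↦ (htouch h.symm).symm
  · rw [piecewise_eq_of_notMem _ _ _ (mt hmem.1 hle.not_gt)]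
    exact deriv_max_of_le hfy hgy hle htouch

open scoped Classical in
theorem deriv_min_ae_eq_piecewise (hf : ∀ᵐ y ∂μ, DifferentiableAt ℝ f y)
    (hg : ∀ᵐ y ∂μ, DifferentiableAt ℝ g y) :
    deriv (fun z ↦ min (f z) (g z)) =ᵐ[μ]
      (interior {z | g z < f z}).piecewise (deriv g) (deriv f) := by
  filter_upwards [hf, hg, ae_eq_imp_deriv_eq hf hg] with y hfy hgy htouch
  have hmem := mem_interior_setOf_lt_iff hgy.continuousAt hfy.continuousAt
  rcases lt_or_ge (g y) (f y) with hlt | hle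
  · rw [piecewise_eq_of_mem _ _ _ (hmem.2 hlt)]
    simp only [min_comm (f _)]
    exact deriv_min_of_le hgy hfy hlt.le fun h ↦ (htouch h.symm).symm
  · rw [piecewise_eq_of_notMem _ _ _ (mt hmem.1 hle.not_gt)]
    exact deriv_min_of_le hfy hgy hle htouch

theorem rewiring_integral_identity_general {E : Type*} [NormedAddCommGroup E] [NormedSpace ℝ E]
    [CompleteSpace E] (hf : ∀ᵐ y ∂μ, DifferentiableAt ℝ f y)
    (hg : ∀ᵐ y ∂μ, DifferentiableAt ℝ g y) {φ : ℝ → E}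
    (hφf : Integrable (fun y ↦ φ (deriv f y)) μ) (hφg : Integrable (fun y ↦ φ (deriv g y)) μ) :
    (∫ y, φ (deriv f y) ∂μ) + (∫ y, φ (deriv g y) ∂μ) =
      (∫ y, φ (deriv (fun z ↦ max (f z) (g z)) y) ∂μ) +
        (∫ y, φ (deriv (fun z ↦ min (f z) (g z)) y) ∂μ) := by
  classical
  have hmax := integral_congr_ae <| (deriv_max_ae_eq_piecewise hf hg).fun_comp φ
  have hmin := integral_congr_ae <| (deriv_min_ae_eq_piecewise hf hg).fun_comp φ
  simp only [Function.comp_apply, apply_piecewise _ _ _ fun _ ↦ φ] at hmax hmin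
  rw [hmax, hmin]
  exact (integral_piecewise_add_integral_piecewise_swap isOpen_interior.measurableSet hφf hφg).symm

end Rewiring

theorem integrable_comp_deriv_of_lipschitzWith {𝕜 F G : Type*} [NontriviallyNormedField 𝕜]
    [MeasurableSpace 𝕜] [OpensMeasurableSpace 𝕜] [NormedAddCommGroup F] [NormedSpace 𝕜 F]
    [CompleteSpace F] [MeasurableSpace F] [BorelSpace F] [NormedAddCommGroup G]
    {μ : Measure 𝕜} [IsFiniteMeasure μ]
    {K : NNReal} {f : 𝕜 → F} (hf : LipschitzWith K f) {φ : F → G} (hφ : StronglyMeasurable φ)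
    {C : ℝ} (hC : ∀ u, ‖u‖ ≤ K → ‖φ u‖ ≤ C) : Integrable (fun x ↦ φ (deriv f x)) μ :=
  .of_bound (hφ.comp_measurable (measurable_deriv f)).aestronglyMeasurable C <|
    .of_forall fun _ ↦ hC _ (norm_deriv_le_of_lipschitz hf)

/-- The rewiring identity: for `1`-Lipschitz `f, g : ℝ → ℝ`, `a < b`, and any bounded Borel
measurable `φ` on `[-1,1]`, the total integral of `φ` of the derivative is conserved by
replacing `f, g` with their pointwise max and min. -/
theorem rewiring_integral_identity
    (f g : ℝ → ℝ) (hf : LipschitzWith 1 f) (hg : LipschitzWith 1 g)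
    (a b : ℝ) (hab : a < b) (φ : ℝ → ℝ) (hφm : Measurable φ)
    (hφb : ∃ C : ℝ, ∀ u ∈ Set.Icc (-1 : ℝ) 1, |φ u| ≤ C) :
    (∫ y in a..b, φ (deriv f y)) + (∫ y in a..b, φ (deriv g y)) =
      (∫ y in a..b, φ (deriv (fun z => max (f z) (g z)) y)) +
        (∫ y in a..b, φ (deriv (fun z => min (f z) (g z)) y)) := by
  obtain ⟨C, hC⟩ := hφb
  have hint {h : ℝ → ℝ} (hh : LipschitzWith 1 h) :
      Integrable (fun y ↦ φ (deriv h y)) (volume.restrict (Ioc a b)) :=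
    integrable_comp_deriv_of_lipschitzWith hh hφm.stronglyMeasurable fun u hu ↦ hC u (abs_le.1 hu)
  simp only [integral_of_le hab.le]
  exact rewiring_integral_identity_general (ae_restrict_of_ae hf.ae_differentiableAt_real)
    (ae_restrict_of_ae hg.ae_differentiableAt_real) (hint hf) (hint hg)
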